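/- For every R > 0 and every constant c > 0, letting p_t(r) = c · e^{−t/8} · t^{−3/2} · sinh(r) · ∫_r^∞ σ·e^{−σ²/(2t)}·(cosh(σ) − cosh(r))^{−1/2} dσ, the proportion of mass of p_t in (0,R) tends to zero: lim_{t→∞} (∫_0^R p_t(r) dr) / (∫_0^∞ p_t(r) dr) = 0. -/

import Mathlib

open MeasureTheory Filter Real

/-- The density of the radial part of hyperbolic Brownian motion at time `t`
(with a multiplicative constant `c`). -/
noncomputable def pdens (c t r : ℝ) : ℝ :=
  c * Real.exp (-t / 8) * t ^ (-(3 : ℝ) / 2) * Real.sinh r *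
    ∫ σ in Set.Ioi r,
      σ * Real.exp (-σ ^ 2 / (2 * t)) * (Real.cosh σ - Real.cosh r) ^ (-(1 : ℝ) / 2)

/-!
Since `sinh r / √(cosh σ - cosh r)` is the `r`-derivative of `-2 √(cosh σ - cosh r)`, exchanging the
order of integration makes the masses explicit. The total mass is a multiple of
`∫_0^∞ σ e^{-σ²/(2t)} sinh(σ/2) dσ`, which is half the integral over `ℝ` of the odd function
`σ e^{-σ²/(2t)}` against `e^{σ/2}`: up to a factor it is the mean of Brownian motion with drift
`1/2` at time `t`, and the total mass equals `c √π` for every `t`. For the mass of `(0, R)` the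
exponential growth in `σ` cancels, which leaves a centred Gaussian integral and a bound of order
`e^{-t/8} / t`.
-/

open Set ProbabilityTheory

lemma sqrt_mul_sqrt_sub_sqrt_sub_le {x d : ℝ} (hx : 0 ≤ x) (hd : 0 ≤ d) :
    √x * (√x - √(x - d)) ≤ d := by
  have hle : √(x - d) ≤ √x := sqrt_le_sqrt (sub_le_self x hd)
  have hsq : x - d ≤ √(x - d) * √(x - d) := by
    rcases le_total 0 (x - d) with h | h
    · rw [mul_self_sqrt h]
    · exact h.trans (mul_self_nonneg _)
  nlinarith [mul_self_sqrt hx, mul_le_mul_of_nonneg_left hle (sqrt_nonneg (x - d))]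

lemma sqrt_cosh_sub_one {σ : ℝ} (hσ : 0 ≤ σ) : √(cosh σ - 1) = √2 * sinh (σ / 2) := by
  have h : cosh σ - 1 = 2 * sinh (σ / 2) ^ 2 := by
    rw [← mul_div_cancel₀ σ two_ne_zero, cosh_two_mul, cosh_sq]
    ring_nf
  rw [h, sqrt_mul zero_le_two, sqrt_sq (sinh_nonneg_iff.2 (by positivity))]

section AbelKernel

variable {r σ R : ℝ}

/-- The kernel of the Abel-type transform `w ↦ ∫_r^∞ w(σ) sinh r / √(cosh σ - cosh r) dσ`, whose
value at `w(σ) = σ e^{-σ²/(2t)}` is `pdens c t r` up to a factor depending on `t`. As `√` vanishes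
on negative numbers and division by zero yields zero, it is zero for `0 ≤ σ ≤ r`, so that `σ` can
range over `(0, ∞)` instead of `(r, ∞)`. -/
noncomputable def abelKernel (r σ : ℝ) : ℝ :=
  sinh r / √(cosh σ - cosh r)

lemma abelKernel_nonneg (hr : 0 ≤ r) : 0 ≤ abelKernel r σ :=
  div_nonneg (sinh_nonneg_iff.2 hr) (sqrt_nonneg _)

lemma abelKernel_eq_zero_of_le (hσ : 0 ≤ σ) (h : σ ≤ r) : abelKernel r σ = 0 := by
  have : cosh σ ≤ cosh r := by rwa [cosh_le_cosh, abs_of_nonneg hσ, abs_of_nonneg (hσ.trans h)]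
  rw [abelKernel, sqrt_eq_zero_of_nonpos (sub_nonpos.2 this), div_zero]

lemma abelKernel_eq_zero_of_mem_Ioi_sdiff_Ioc (hσ : 0 ≤ σ) (hr : r ∈ Ioi 0 \ Ioc 0 σ) :
    abelKernel r σ = 0 :=
  abelKernel_eq_zero_of_le hσ (not_le.1 fun h ↦ hr.2 ⟨hr.1, h⟩).le

lemma measurable_abelKernel : Measurable (Function.uncurry abelKernel) := by
  unfold abelKernel Function.uncurry
  fun_prop

lemma hasDerivAt_neg_two_mul_sqrt_cosh_sub_cosh (h : cosh r < cosh σ) :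
    HasDerivAt (fun r ↦ -2 * √(cosh σ - cosh r)) (abelKernel r σ) r := by
  convert! (((hasDerivAt_cosh r).const_sub (cosh σ)).sqrt (sub_pos.2 h).ne').const_mul (-2) using 1
  rw [abelKernel]
  ring

lemma hasDerivWithinAt_Ioi_neg_two_mul_sqrt_cosh_sub_cosh (hσ : 0 ≤ σ) (hr : 0 ≤ r) :
    HasDerivWithinAt (fun r ↦ -2 * √(cosh σ - cosh r)) (abelKernel r σ) (Ioi r) r := by
  rcases lt_or_ge r σ with h | h
  · exact (hasDerivAt_neg_two_mul_sqrt_cosh_sub_cosh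
      (cosh_strictMonoOn hr hσ h)).hasDerivWithinAt
  · have hzero : ∀ x, r ≤ x → -2 * √(cosh σ - cosh x) = 0 := fun x hx ↦ by
      have : cosh σ ≤ cosh x := cosh_strictMonoOn.monotoneOn hσ (hr.trans hx) (h.trans hx)
      rw [sqrt_eq_zero_of_nonpos (sub_nonpos.2 this), mul_zero]
    rw [abelKernel_eq_zero_of_le hσ h]
    exact (hasDerivWithinAt_const r (Ioi r) (0 : ℝ)).congr
      (fun x hx ↦ hzero x (le_of_lt hx)) (hzero r le_rfl)

lemma integrableOn_Ioc_abelKernel (hσ : 0 ≤ σ) :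
    IntegrableOn (abelKernel · σ) (Ioc 0 R) :=
  intervalIntegral.integrableOn_deriv_right_of_nonneg (by fun_prop)
    (fun _ hr ↦ hasDerivWithinAt_Ioi_neg_two_mul_sqrt_cosh_sub_cosh hσ hr.1.le)
    fun _ hr ↦ abelKernel_nonneg hr.1.le

lemma setIntegral_Ioc_abelKernel (hσ : 0 ≤ σ) (hR : 0 ≤ R) :
    ∫ r in Ioc 0 R, abelKernel r σ = 2 * (√(cosh σ - 1) - √(cosh σ - cosh R)) := by
  rw [← intervalIntegral.integral_of_le hR,
    intervalIntegral.integral_eq_sub_of_hasDeriv_right_of_le hR (by fun_prop)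
      (fun _ hr ↦ hasDerivWithinAt_Ioi_neg_two_mul_sqrt_cosh_sub_cosh hσ hr.1.le)
      ((intervalIntegrable_iff_integrableOn_Ioc_of_le hR).2 (integrableOn_Ioc_abelKernel hσ)),
    cosh_zero]
  ring

lemma integrableOn_Ioi_abelKernel (hσ : 0 ≤ σ) : IntegrableOn (abelKernel · σ) (Ioi 0) :=
  (integrableOn_Ioc_abelKernel hσ).of_forall_sdiff_eq_zero measurableSet_Ioi fun _ hr ↦
    abelKernel_eq_zero_of_mem_Ioi_sdiff_Ioc hσ hr

lemma setIntegral_Ioi_abelKernel (hσ : 0 ≤ σ) :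
    ∫ r in Ioi 0, abelKernel r σ = 2 * √2 * sinh (σ / 2) := by
  rw [setIntegral_eq_of_subset_of_forall_sdiff_eq_zero measurableSet_Ioi Ioc_subset_Ioi_self
    fun _ hr ↦ abelKernel_eq_zero_of_mem_Ioi_sdiff_Ioc hσ hr,
    setIntegral_Ioc_abelKernel hσ hσ, sub_self, sqrt_zero, sub_zero, sqrt_cosh_sub_one hσ,
    mul_assoc]

lemma mul_setIntegral_Ioc_abelKernel_le (hσ : 0 ≤ σ) (hR : 0 ≤ R) :
    σ * ∫ r in Ioc 0 R, abelKernel r σ ≤ 2 * √2 * (cosh R - 1) := by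
  have hroot : σ ≤ √2 * √(cosh σ - 1) := by
    rw [sqrt_cosh_sub_one hσ, ← mul_assoc, mul_self_sqrt zero_le_two]
    linarith [self_le_sinh_iff.2 (div_nonneg hσ zero_le_two)]
  calc σ * ∫ r in Ioc 0 R, abelKernel r σ
      ≤ √2 * √(cosh σ - 1) * ∫ r in Ioc 0 R, abelKernel r σ :=
        mul_le_mul_of_nonneg_right hroot
          (setIntegral_nonneg measurableSet_Ioc fun _ hr ↦ abelKernel_nonneg hr.1.le)
    _ = 2 * √2 * (√(cosh σ - 1) * (√(cosh σ - 1) - √(cosh σ - 1 - (cosh R - 1)))) := by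
        rw [setIntegral_Ioc_abelKernel hσ hR, sub_sub_sub_cancel_right]
        ring
    _ ≤ 2 * √2 * (cosh R - 1) := by
        gcongr
        exact sqrt_mul_sqrt_sub_sqrt_sub_le (sub_nonneg.2 (one_le_cosh σ))
          (sub_nonneg.2 (one_le_cosh R))

lemma integrable_prod_mul_abelKernel {w : ℝ → ℝ} (hw : Measurable w)
    (hint : IntegrableOn (fun σ ↦ w σ * sinh (σ / 2)) (Ioi 0)) :
    Integrable (fun p : ℝ × ℝ ↦ w p.2 * abelKernel p.1 p.2)
      ((volume.restrict (Ioi 0)).prod (volume.restrict (Ioi 0))) := by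
  have hmeas : Measurable fun p : ℝ × ℝ ↦ w p.2 * abelKernel p.1 p.2 :=
    (hw.comp measurable_snd).mul measurable_abelKernel
  refine (integrable_prod_iff' hmeas.aestronglyMeasurable).2 ⟨?_, ?_⟩
  · filter_upwards [ae_restrict_mem measurableSet_Ioi] with σ hσ
    exact (integrableOn_Ioi_abelKernel (le_of_lt hσ)).const_mul (w σ)
  · refine (hint.norm.const_mul (2 * √2)).congr ?_
    filter_upwards [ae_restrict_mem measurableSet_Ioi] with σ hσ
    have hsinh : 0 ≤ sinh (σ / 2) := sinh_nonneg_iff.2 (half_pos hσ).le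
    have hnorm : ∀ r ∈ Ioi (0 : ℝ), ‖w σ * abelKernel r σ‖ = ‖w σ‖ * abelKernel r σ :=
      fun r hr ↦ by rw [norm_mul, norm_of_nonneg (abelKernel_nonneg (le_of_lt hr))]
    rw [setIntegral_congr_fun measurableSet_Ioi hnorm, integral_const_mul,
      setIntegral_Ioi_abelKernel (le_of_lt hσ), norm_mul, norm_of_nonneg hsinh]
    ring

lemma setIntegral_integral_mul_abelKernel {w : ℝ → ℝ} {s : Set ℝ} (hw : Measurable w)
    (hint : IntegrableOn (fun σ ↦ w σ * sinh (σ / 2)) (Ioi 0)) (hs : s ⊆ Ioi 0) :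
    ∫ r in s, ∫ σ in Ioi 0, w σ * abelKernel r σ =
      ∫ σ in Ioi 0, w σ * ∫ r in s, abelKernel r σ := by
  rw [integral_integral_swap (f := fun r σ ↦ w σ * abelKernel r σ)
    ((integrable_prod_mul_abelKernel hw hint).mono_measure
      (Measure.prod_mono (Measure.restrict_mono hs le_rfl) le_rfl))]
  simp only [integral_const_mul]

end AbelKernel

section Gaussian

lemma integrable_mul_gaussianPDFReal (m : ℝ) {v : NNReal} (hv : v ≠ 0) :
    Integrable fun x ↦ x * gaussianPDFReal m v x := by
  have h : Integrable id (gaussianReal m v) := (memLp_id_gaussianReal 1).integrable le_rfl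
  rw [gaussianReal_of_var_ne_zero m hv, integrable_withDensity_iff (measurable_gaussianPDF m v)
    (ae_of_all _ fun _ ↦ gaussianPDF_lt_top)] at h
  simpa only [id, toReal_gaussianPDF] using h

lemma integral_mul_gaussianPDFReal (m : ℝ) {v : NNReal} (hv : v ≠ 0) :
    ∫ x, x * gaussianPDFReal m v x = m := by
  simpa only [integral_id_gaussianReal, smul_eq_mul, mul_comm] using
    (integral_gaussianReal_eq_integral_smul (μ := m) (f := fun x ↦ x) hv).symm

variable {t : ℝ} (a : ℝ)

lemma exp_neg_sq_div_mul_exp_eq_gaussianPDFReal (ht : 0 < t) (x : ℝ) :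
    exp (-x ^ 2 / (2 * t)) * exp (a * x) =
      √(2 * π * t) * exp (a ^ 2 * t / 2) * gaussianPDFReal (a * t) t.toNNReal x := by
  have hsqrt : √(2 * π * t) ≠ 0 := by positivity
  rw [gaussianPDFReal_def, coe_toNNReal t ht.le, mul_mul_mul_comm, mul_inv_cancel₀ hsqrt, one_mul,
    ← exp_add, ← exp_add]
  congr 1
  field

lemma mul_exp_neg_sq_div_mul_sinh_eq_gaussianPDFReal_sub (ht : 0 < t) (x : ℝ) :
    x * exp (-x ^ 2 / (2 * t)) * sinh (a * x) =
      √(2 * π * t) * exp (a ^ 2 * t / 2) / 2 * (x * gaussianPDFReal (a * t) t.toNNReal x -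
        x * gaussianPDFReal (-a * t) t.toNNReal x) := by
  have hpos := exp_neg_sq_div_mul_exp_eq_gaussianPDFReal a ht x
  have hneg := exp_neg_sq_div_mul_exp_eq_gaussianPDFReal (-a) ht x
  rw [neg_sq, neg_mul a x] at hneg
  rw [sinh_eq]
  linear_combination x / 2 * (hpos - hneg)

lemma integrable_mul_exp_neg_sq_div_mul_sinh (ht : 0 < t) :
    Integrable fun x ↦ x * exp (-x ^ 2 / (2 * t)) * sinh (a * x) := by
  have hv : t.toNNReal ≠ 0 := (toNNReal_pos.2 ht).ne'
  simp only [mul_exp_neg_sq_div_mul_sinh_eq_gaussianPDFReal_sub a ht]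
  exact ((integrable_mul_gaussianPDFReal _ hv).sub
    (integrable_mul_gaussianPDFReal _ hv)).const_mul _

lemma integral_Ioi_mul_exp_neg_sq_div_mul_sinh (ht : 0 < t) :
    ∫ x in Ioi 0, x * exp (-x ^ 2 / (2 * t)) * sinh (a * x) =
      a * t * √(2 * π * t) * exp (a ^ 2 * t / 2) / 2 := by
  have hv : t.toNNReal ≠ 0 := (toNNReal_pos.2 ht).ne'
  have heven : ∀ x : ℝ, |x| * exp (-|x| ^ 2 / (2 * t)) * sinh (a * |x|) =
      x * exp (-x ^ 2 / (2 * t)) * sinh (a * x) := fun x ↦ by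
    rcases abs_choice x with h | h <;> simp [h]
  have hhalf := integral_comp_abs (f := fun x ↦ x * exp (-x ^ 2 / (2 * t)) * sinh (a * x))
  simp only [heven] at hhalf
  have hline : ∫ x, x * exp (-x ^ 2 / (2 * t)) * sinh (a * x) =
      √(2 * π * t) * exp (a ^ 2 * t / 2) / 2 * (a * t - -a * t) := by
    simp only [mul_exp_neg_sq_div_mul_sinh_eq_gaussianPDFReal_sub a ht]
    rw [integral_const_mul, integral_sub (integrable_mul_gaussianPDFReal _ hv)
      (integrable_mul_gaussianPDFReal _ hv), integral_mul_gaussianPDFReal _ hv,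
      integral_mul_gaussianPDFReal _ hv]
  linarith

end Gaussian

section Mass

variable {c t r R : ℝ}

lemma pdens_eq_integral_mul_abelKernel (hr : 0 < r) :
    pdens c t r = c * exp (-t / 8) * t ^ (-(3 : ℝ) / 2) *
      ∫ σ in Ioi 0, σ * exp (-σ ^ 2 / (2 * t)) * abelKernel r σ := by
  have hsupp : ∫ σ in Ioi 0, σ * exp (-σ ^ 2 / (2 * t)) * abelKernel r σ =
      ∫ σ in Ioi r, σ * exp (-σ ^ 2 / (2 * t)) * abelKernel r σ :=
    setIntegral_eq_of_subset_of_forall_sdiff_eq_zero measurableSet_Ioi (Ioi_subset_Ioi hr.le)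
      fun σ hσ ↦ by rw [abelKernel_eq_zero_of_le (le_of_lt hσ.1) (not_lt.1 hσ.2), mul_zero]
  rw [pdens, mul_assoc _ (sinh r), ← integral_const_mul, hsupp]
  congr 1
  refine setIntegral_congr_fun measurableSet_Ioi fun σ hσ ↦ ?_
  have hpos : 0 ≤ cosh σ - cosh r :=
    sub_nonneg.2 (cosh_strictMonoOn.monotoneOn hr.le (hr.trans hσ).le (le_of_lt hσ))
  simp only [abelKernel]
  rw [neg_div 2 (1 : ℝ), rpow_neg hpos, ← sqrt_eq_rpow]
  ring

lemma setIntegral_pdens {s : Set ℝ} (ht : 0 < t) (hs : MeasurableSet s) (hs0 : s ⊆ Ioi 0) :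
    ∫ r in s, pdens c t r = c * exp (-t / 8) * t ^ (-(3 : ℝ) / 2) *
      ∫ σ in Ioi 0, σ * exp (-σ ^ 2 / (2 * t)) * ∫ r in s, abelKernel r σ := by
  rw [setIntegral_congr_fun hs fun r hr ↦ pdens_eq_integral_mul_abelKernel (hs0 hr),
    integral_const_mul, setIntegral_integral_mul_abelKernel (by fun_prop) ?_ hs0]
  simpa only [div_eq_inv_mul] using
    (integrable_mul_exp_neg_sq_div_mul_sinh 2⁻¹ ht).integrableOn (s := Ioi 0)

lemma rpow_neg_three_halves_mul_sqrt (ht : 0 < t) : t ^ (-(3 : ℝ) / 2) * √t = t⁻¹ := by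
  rw [sqrt_eq_rpow, ← rpow_add ht, ← rpow_neg_one]
  norm_num

theorem integral_Ioi_pdens (ht : 0 < t) : ∫ r in Ioi 0, pdens c t r = c * √π := by
  have hinner : ∫ σ in Ioi 0, σ * exp (-σ ^ 2 / (2 * t)) * ∫ r in Ioi 0, abelKernel r σ =
      2 * √2 * (t * √(2 * π * t) * exp (t / 8) / 4) := by
    calc _ = ∫ σ in Ioi 0, 2 * √2 * (σ * exp (-σ ^ 2 / (2 * t)) * sinh (1 / 2 * σ)) := by
          refine setIntegral_congr_fun measurableSet_Ioi fun σ hσ ↦ ?_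
          simp only [setIntegral_Ioi_abelKernel (le_of_lt hσ), one_div_mul_eq_div]
          ring
      _ = _ := by
          rw [integral_const_mul, integral_Ioi_mul_exp_neg_sq_div_mul_sinh (1 / 2) ht]
          ring_nf
  have hexp : exp (-t / 8) * exp (t / 8) = 1 := by rw [← exp_add, neg_div, neg_add_cancel, exp_zero]
  rw [setIntegral_pdens ht measurableSet_Ioi subset_rfl, hinner, sqrt_mul (by positivity),
    sqrt_mul zero_le_two]
  calc _ = c * √π * (exp (-t / 8) * exp (t / 8)) * (√2 * √2 / 2) *
        (t ^ (-(3 : ℝ) / 2) * √t * t) := by ring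
    _ = c * √π := by
        rw [hexp, mul_self_sqrt zero_le_two, rpow_neg_three_halves_mul_sqrt ht,
          inv_mul_cancel₀ ht.ne', div_self two_ne_zero]
        ring

lemma pdens_nonneg (hc : 0 ≤ c) (ht : 0 ≤ t) (hr : 0 < r) : 0 ≤ pdens c t r := by
  rw [pdens_eq_integral_mul_abelKernel hr]
  refine mul_nonneg (by positivity) (setIntegral_nonneg measurableSet_Ioi fun σ hσ ↦ ?_)
  exact mul_nonneg (mul_nonneg (le_of_lt hσ) (exp_pos _).le) (abelKernel_nonneg hr.le)

theorem setIntegral_Ioo_pdens_le (hc : 0 ≤ c) (ht : 0 < t) (hR : 0 ≤ R) :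
    ∫ r in Ioo 0 R, pdens c t r ≤ 2 * c * √π * (cosh R - 1) * (exp (-t / 8) * t⁻¹) := by
  have hgauss : IntegrableOn (fun σ : ℝ ↦ exp (-(2 * t)⁻¹ * σ ^ 2)) (Ioi 0) :=
    (integrable_exp_neg_mul_sq (by positivity)).integrableOn
  have hinner : ∫ σ in Ioi 0, σ * exp (-σ ^ 2 / (2 * t)) * ∫ r in Ioc 0 R, abelKernel r σ ≤
      2 * √2 * (cosh R - 1) * (√(2 * π * t) / 2) := by
    calc _ ≤ ∫ σ in Ioi 0, 2 * √2 * (cosh R - 1) * exp (-(2 * t)⁻¹ * σ ^ 2) := by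
          refine integral_mono_of_nonneg ?_ (hgauss.const_mul _) ?_
          · filter_upwards [ae_restrict_mem measurableSet_Ioi] with σ hσ
            exact mul_nonneg (mul_nonneg (le_of_lt hσ) (exp_pos _).le)
              (setIntegral_nonneg measurableSet_Ioc fun r hr ↦ abelKernel_nonneg hr.1.le)
          · filter_upwards [ae_restrict_mem measurableSet_Ioi] with σ hσ
            rw [mul_right_comm, neg_mul, ← div_eq_inv_mul, ← neg_div]
            exact mul_le_mul_of_nonneg_right (mul_setIntegral_Ioc_abelKernel_le (le_of_lt hσ) hR)
              (exp_pos _).le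
      _ = _ := by
          rw [integral_const_mul, integral_gaussian_Ioi, div_inv_eq_mul]
          ring_nf
  rw [← integral_Ioc_eq_integral_Ioo,
    setIntegral_pdens ht measurableSet_Ioc Ioc_subset_Ioi_self]
  calc _ ≤ c * exp (-t / 8) * t ^ (-(3 : ℝ) / 2) *
        (2 * √2 * (cosh R - 1) * (√(2 * π * t) / 2)) := by gcongr
    _ = c * √π * (√2 * √2) * (cosh R - 1) * (exp (-t / 8) * (t ^ (-(3 : ℝ) / 2) * √t)) := by
        rw [sqrt_mul (by positivity), sqrt_mul zero_le_two]
        ring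
    _ = 2 * c * √π * (cosh R - 1) * (exp (-t / 8) * t⁻¹) := by
        rw [mul_self_sqrt zero_le_two, rpow_neg_three_halves_mul_sqrt ht]
        ring

lemma tendsto_setIntegral_Ioo_pdens (hc : 0 ≤ c) (hR : 0 ≤ R) :
    Tendsto (fun t ↦ ∫ r in Ioo 0 R, pdens c t r) atTop (nhds 0) := by
  have hexp : Tendsto (fun t : ℝ ↦ exp (-t / 8)) atTop (nhds 0) :=
    tendsto_exp_atBot.comp (tendsto_neg_atTop_atBot.atBot_div_const (by norm_num))
  have hbound : Tendsto (fun t : ℝ ↦ 2 * c * √π * (cosh R - 1) * (exp (-t / 8) * t⁻¹))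
      atTop (nhds 0) := by
    simpa only [mul_zero] using (hexp.mul tendsto_inv_atTop_zero).const_mul _
  refine squeeze_zero' ?_ ?_ hbound
  · filter_upwards [eventually_ge_atTop 0] with t ht
    exact setIntegral_nonneg measurableSet_Ioo fun r hr ↦ pdens_nonneg hc ht hr.1
  · filter_upwards [eventually_gt_atTop 0] with t ht
    exact setIntegral_Ioo_pdens_le hc ht hR

end Mass

theorem mass_near_origin_tendsto_zero (R c : ℝ) (hR : 0 < R) (hc : 0 < c) :
    Tendsto
      (fun t : ℝ =>
        (∫ r in Set.Ioo (0 : ℝ) R, pdens c t r) / ∫ r in Set.Ioi (0 : ℝ), pdens c t r)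
      atTop (nhds 0) := by
  have hratio : Tendsto (fun t ↦ (∫ r in Ioo 0 R, pdens c t r) / (c * √π)) atTop (nhds 0) := by
    simpa only [zero_div] using (tendsto_setIntegral_Ioo_pdens hc.le hR.le).div_const (c * √π)
  refine hratio.congr' ?_
  filter_upwards [eventually_gt_atTop 0] with t ht
  rw [integral_Ioi_pdens ht]
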